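/- arXiv:2501.00690 — 2 statements merged into one kernel-verified Lean document; each statement's English description precedes it below -/
import Mathlib

section
/- There exists a constant C depending only on m and δ such that for every measurable Z : ℝ² → ℂ: ‖⟨k⟩^m·A(k)·|η − kt|·Z‖_{L²_k L¹_η} ≤ C·μ^{−1/4}·( E^{1/2}·D_γ^{1/4} + μ^{−δ}·E^{1/2−2δ}·D_α^{1/4+δ} ). -/
open MeasureTheory Real
open scoped ENNReal NNReal

noncomputable section

/-- The Japanese bracket `⟨k⟩ = (1+k²)^{1/2}`. -/
def jap (k : ℝ) : ℝ := Real.sqrt (1 + k ^ 2)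

/-- The moving-frame symbol `p(k,η) = k² + (η − kt)²`. -/
def pw (t k η : ℝ) : ℝ := k ^ 2 + (η - k * t) ^ 2

/-- The weight `A(k)`. -/
def Aw (μ k : ℝ) : ℝ :=
  if |k| < μ then 1 else μ ^ ((1 : ℝ) / 3) * |k| ^ (-(1 : ℝ) / 3)

/-- The weight `B(k)`. -/
def Bw (μ k : ℝ) : ℝ :=
  if |k| < μ then μ ^ (-(1 : ℝ) / 2) else μ ^ ((1 : ℝ) / 6) * |k| ^ (-(2 : ℝ) / 3)

/-- Weighted `L¹(ℝ²)` norm `‖w·Z‖_{L¹}` (iterated, value in `[0,∞]`). -/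
def L1n (w : ℝ → ℝ → ℝ) (Z : ℝ × ℝ → ℂ) : ℝ≥0∞ :=
  ∫⁻ k : ℝ, ∫⁻ η : ℝ, ENNReal.ofReal (w k η) * (‖Z (k, η)‖₊ : ℝ≥0∞)

/-- Weighted `L²(ℝ²)` norm `‖w·Z‖_{L²}` (value in `[0,∞]`). -/
def L2n (w : ℝ → ℝ → ℝ) (Z : ℝ × ℝ → ℂ) : ℝ≥0∞ :=
  (∫⁻ k : ℝ, ∫⁻ η : ℝ,
      (ENNReal.ofReal (w k η) * (‖Z (k, η)‖₊ : ℝ≥0∞)) ^ 2) ^ ((1 : ℝ) / 2)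

/-- Weighted mixed norm `‖w·Z‖_{L²_k L¹_η}` (value in `[0,∞]`). -/
def L2L1n (w : ℝ → ℝ → ℝ) (Z : ℝ × ℝ → ℂ) : ℝ≥0∞ :=
  (∫⁻ k : ℝ,
      (∫⁻ η : ℝ, ENNReal.ofReal (w k η) * (‖Z (k, η)‖₊ : ℝ≥0∞)) ^ 2) ^ ((1 : ℝ) / 2)

/-- The energy `E = ‖⟨k⟩^m Z‖_{L²} + ‖⟨k⟩^m A(k)(η−kt) Z‖_{L²}`. -/
def En (t μ m : ℝ) (Z : ℝ × ℝ → ℂ) : ℝ≥0∞ :=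
  L2n (fun k _ => jap k ^ m) Z + L2n (fun k η => jap k ^ m * Aw μ k * |η - k * t|) Z

/-- The dissipation `D_γ = μ·∬ ⟨k⟩^{2m} p |Z|²`. -/
def Dg (t μ m : ℝ) (Z : ℝ × ℝ → ℂ) : ℝ≥0∞ :=
  ENNReal.ofReal μ * ∫⁻ k : ℝ, ∫⁻ η : ℝ,
    ENNReal.ofReal (jap k ^ (2 * m) * pw t k η) * (‖Z (k, η)‖₊ : ℝ≥0∞) ^ 2

/-- The dissipation `D_τ = ∬ ⟨k⟩^{2m} k² p⁻¹ |Z|²`. -/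
def Dtau (t m : ℝ) (Z : ℝ × ℝ → ℂ) : ℝ≥0∞ :=
  ∫⁻ k : ℝ, ∫⁻ η : ℝ,
    ENNReal.ofReal (jap k ^ (2 * m) * k ^ 2 / pw t k η) * (‖Z (k, η)‖₊ : ℝ≥0∞) ^ 2

/-- The dissipation `D_α = μ·∬ ⟨k⟩^{2m} A(k)² (η−kt)² p |Z|²`. -/
def Dal (t μ m : ℝ) (Z : ℝ × ℝ → ℂ) : ℝ≥0∞ :=
  ENNReal.ofReal μ * ∫⁻ k : ℝ, ∫⁻ η : ℝ,
    ENNReal.ofReal (jap k ^ (2 * m) * Aw μ k ^ 2 * (η - k * t) ^ 2 * pw t k η)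
      * (‖Z (k, η)‖₊ : ℝ≥0∞) ^ 2

/-- The dissipation `D_{τα} = ∬ ⟨k⟩^{2m} A(k)² k² (η−kt)² p⁻¹ |Z|²`. -/
def Dta (t μ m : ℝ) (Z : ℝ × ℝ → ℂ) : ℝ≥0∞ :=
  ∫⁻ k : ℝ, ∫⁻ η : ℝ,
    ENNReal.ofReal (jap k ^ (2 * m) * Aw μ k ^ 2 * k ^ 2 * (η - k * t) ^ 2 / pw t k η)
      * (‖Z (k, η)‖₊ : ℝ≥0∞) ^ 2

/-- The dissipation `D_β = ∬ ⟨k⟩^{2m} B(k)² k² |Z|²`. -/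
def Db (t μ m : ℝ) (Z : ℝ × ℝ → ℂ) : ℝ≥0∞ :=
  ∫⁻ k : ℝ, ∫⁻ η : ℝ,
    ENNReal.ofReal (jap k ^ (2 * m) * Bw μ k ^ 2 * k ^ 2) * (‖Z (k, η)‖₊ : ℝ≥0∞) ^ 2

lemma aux_holder (p q : ℝ) (hp : 0 ≤ p) (hq : 0 ≤ q) (hpq : p + q = 1)
    (a b : ℝ → ℝ → ℝ≥0∞) (ha : Measurable (Function.uncurry a))
    (hb : Measurable (Function.uncurry b)) (h : ℝ → ℝ≥0∞) (hh : Measurable h) (t : ℝ) :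
    ∫⁻ k, (∫⁻ η, (a k η ^ p * b k η ^ q) ^ ((1 : ℝ) / 2) * h (η - k * t) ^ ((1 : ℝ) / 2)) ^ 2
      ≤ (∫⁻ y, h y) * ((∫⁻ k, ∫⁻ η, a k η) ^ p * (∫⁻ k, ∫⁻ η, b k η) ^ q) := by
  have ha' : ∀ k, Measurable (a k) := fun k => ha.comp measurable_prodMk_left
  have hb' : ∀ k, Measurable (b k) := fun k => hb.comp measurable_prodMk_left
  have hA : Measurable fun k => ∫⁻ η, a k η := ha.lintegral_prod_right'
  have hB : Measurable fun k => ∫⁻ η, b k η := hb.lintegral_prod_right'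
  have key : ∀ k, (∫⁻ η, (a k η ^ p * b k η ^ q) ^ ((1 : ℝ) / 2)
      * h (η - k * t) ^ ((1 : ℝ) / 2)) ^ 2
      ≤ (∫⁻ y, h y) * ((∫⁻ η, a k η) ^ p * (∫⁻ η, b k η) ^ q) := by
    intro k
    have h1 := ENNReal.lintegral_mul_norm_pow_le (μ := volume)
      (f := fun η => a k η ^ p * b k η ^ q) (g := fun η => h (η - k * t))
      (by have := ha' k; have := hb' k; fun_prop) (by fun_prop)
      (p := 1 / 2) (q := 1 / 2) (by norm_num) (by norm_num) (by norm_num)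
    have h2 := ENNReal.lintegral_mul_norm_pow_le (μ := volume)
      (ha' k).aemeasurable (hb' k).aemeasurable hp hq hpq
    have h3 : ∫⁻ η, h (η - k * t) = ∫⁻ y, h y := lintegral_sub_right_eq_self h (k * t)
    rw [h3, ← ENNReal.mul_rpow_of_nonneg _ _ (by norm_num)] at h1
    calc _ ≤ (((∫⁻ η, a k η ^ p * b k η ^ q) * ∫⁻ y, h y) ^ ((1 : ℝ) / 2)) ^ 2 := by gcongr
      _ = (∫⁻ η, a k η ^ p * b k η ^ q) * ∫⁻ y, h y := by
        rw [← ENNReal.rpow_natCast, ← ENNReal.rpow_mul]; norm_num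
      _ ≤ _ := by rw [mul_comm]; gcongr
  calc _ ≤ ∫⁻ k, (∫⁻ y, h y) * ((∫⁻ η, a k η) ^ p * (∫⁻ η, b k η) ^ q) := lintegral_mono key
    _ = (∫⁻ y, h y) * ∫⁻ k, ((∫⁻ η, a k η) ^ p * (∫⁻ η, b k η) ^ q) :=
        lintegral_const_mul _ (by fun_prop)
    _ ≤ _ := by
        gcongr
        exact ENNReal.lintegral_mul_norm_pow_le hA.aemeasurable hB.aemeasurable hp hq hpq

lemma Aw_nonneg {μ : ℝ} (hμ : 0 < μ) (k : ℝ) : 0 ≤ Aw μ k := by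
  unfold Aw; split_ifs <;> positivity

lemma Aw_le_one {μ : ℝ} (hμ : 0 < μ) (k : ℝ) : Aw μ k ≤ 1 := by
  unfold Aw
  split_ifs with h
  · exact le_rfl
  · push Not at h
    have hk : 0 < |k| := lt_of_lt_of_le hμ h
    have : (-(1 : ℝ) / 3) = -(1 / 3) := by norm_num
    rw [this, Real.rpow_neg hk.le, ← div_eq_mul_inv, div_le_one (by positivity)]
    exact Real.rpow_le_rpow hμ.le h (by norm_num)

lemma Aw_meas (μ : ℝ) : Measurable (Aw μ) := by
  unfold Aw
  exact Measurable.ite (measurableSet_lt (by fun_prop) (by fun_prop)) (by fun_prop) (by fun_prop)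

lemma low_real (J A y P z : ℝ) (hJ : 0 ≤ J) (hA : 0 ≤ A) (hA1 : A ≤ 1) (hy : 0 ≤ y)
    (hy1 : y ≤ 1) (hP : y ^ 2 ≤ P) (hz : 0 ≤ z) :
    (J * A * y * z) ^ 4 ≤ (J * z) ^ 2 * (J ^ 2 * P * z ^ 2) := by
  have h1 : A * y ≤ y := by nlinarith
  have h0 : 0 ≤ A * y := by positivity
  have h2 : (A * y) ^ 4 ≤ P := by
    calc (A * y) ^ 4 ≤ y ^ 4 := by gcongr
      _ ≤ y ^ 2 := pow_le_pow_of_le_one hy hy1 (by norm_num)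
      _ ≤ P := hP
  calc (J * A * y * z) ^ 4 = (J * z) ^ 4 * (A * y) ^ 4 := by ring
    _ ≤ (J * z) ^ 4 * P := by gcongr
    _ = _ := by ring

/-- weight -/
def hw (q : ℝ) (y : ℝ) : ℝ≥0∞ := ENNReal.ofReal ((2 / (1 + |y|)) ^ (2 * q))

lemma hw_meas (q : ℝ) : Measurable (hw q) := by
  unfold hw; fun_prop

lemma hw_half (q y : ℝ) :
    hw q y ^ ((1 : ℝ) / 2) = ENNReal.ofReal ((2 / (1 + |y|)) ^ q) := by
  unfold hw
  have h0 : 0 < 2 / (1 + |y|) := by positivity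
  rw [ENNReal.ofReal_rpow_of_nonneg (by positivity) (by norm_num), ← Real.rpow_mul h0.le]
  congr 2; ring

lemma hw_fin (q : ℝ) (hq : 1 < 2 * q) : ∫⁻ y, hw q y ≠ ∞ := by
  have h := finite_integral_one_add_norm (E := ℝ) (μ := volume) (r := 2 * q) (by simpa using hq)
  have : ∀ y, hw q y = ENNReal.ofReal (2 ^ (2 * q)) * ENNReal.ofReal ((1 + ‖y‖) ^ (-(2 * q))) := by
    intro y
    unfold hw
    rw [← ENNReal.ofReal_mul (by positivity), Real.div_rpow (by norm_num) (by positivity),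
      Real.rpow_neg (by positivity), div_eq_mul_inv, Real.norm_eq_abs]
  simp_rw [this]
  rw [lintegral_const_mul _ (by fun_prop)]
  exact ENNReal.mul_ne_top ENNReal.ofReal_ne_top h.ne

lemma pointwise_real (J A y P z p q : ℝ) (hJ : 0 ≤ J) (hA : 0 ≤ A) (hA1 : A ≤ 1) (hy : 0 ≤ y)
    (hP : y ^ 2 ≤ P) (hz : 0 ≤ z) (hp : 0 < p) (hq : 0 < q) (hpq : p + q = 1) :
    J * A * y * z ≤
      (((J * z) ^ 2) ^ ((1 : ℝ) / 2) * (J ^ 2 * P * z ^ 2) ^ ((1 : ℝ) / 2)) ^ ((1 : ℝ) / 2)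
          * (2 / (1 + y)) ^ q
      + (((J * A * y * z) ^ 2) ^ p * (J ^ 2 * A ^ 2 * y ^ 2 * P * z ^ 2) ^ q) ^ ((1 : ℝ) / 2)
          * (2 / (1 + y)) ^ q := by
  have hP0 : 0 ≤ P := le_trans (sq_nonneg y) hP
  set X := J * A * y * z with hX
  have hX0 : 0 ≤ X := by positivity
  rcases le_total y 1 with hy1 | hy1
  · have hl := low_real J A y P z hJ hA hA1 hy hy1 hP hz
    have h1 : 1 ≤ (2 / (1 + y)) ^ q := by
      apply Real.one_le_rpow _ hq.le
      rw [le_div_iff₀ (by positivity)]; linarith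
    have h2 : X ≤ (((J * z) ^ 2) ^ ((1 : ℝ) / 2) * (J ^ 2 * P * z ^ 2) ^ ((1 : ℝ) / 2))
        ^ ((1 : ℝ) / 2) := by
      rw [← Real.mul_rpow (by positivity) (by positivity), ← Real.rpow_mul (by positivity)]
      calc X = (X ^ 4) ^ ((1 : ℝ) / 2 * (1 / 2)) := by
            rw [← Real.rpow_natCast, ← Real.rpow_mul hX0]; norm_num
        _ ≤ _ := by gcongr
    calc X ≤ _ := h2
      _ ≤ _ := le_mul_of_one_le_right (by positivity) h1
      _ ≤ _ := le_add_of_nonneg_right (by positivity)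
  · have h1 : X * y ^ q ≤ ((X ^ 2) ^ p * (J ^ 2 * A ^ 2 * y ^ 2 * P * z ^ 2) ^ q)
        ^ ((1 : ℝ) / 2) := by
      have e1 : (X ^ 2 * y ^ 2) ≤ J ^ 2 * A ^ 2 * y ^ 2 * P * z ^ 2 := by
        calc X ^ 2 * y ^ 2 ≤ X ^ 2 * P := by gcongr
          _ = _ := by rw [hX]; ring
      calc X * y ^ q = ((X ^ 2) ^ p * (X ^ 2 * y ^ 2) ^ q) ^ ((1 : ℝ) / 2) := by
            rw [Real.mul_rpow (x := X ^ 2) (y := y ^ 2) (by positivity) (by positivity), ← mul_assoc,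
              ← Real.rpow_add_of_nonneg (by positivity) hp.le hq.le, hpq, Real.rpow_one,
              Real.mul_rpow (by positivity) (by positivity), ← Real.sqrt_eq_rpow,
              Real.sqrt_sq hX0, ← Real.rpow_mul (by positivity), ← Real.rpow_natCast,
              ← Real.rpow_mul (by positivity)]
            congr 2; push_cast; ring
        _ ≤ _ := by gcongr
    have h2 : 1 ≤ y ^ q * (2 / (1 + y)) ^ q := by
      rw [← Real.mul_rpow (by positivity) (by positivity)]
      apply Real.one_le_rpow _ hq.le
      rw [← mul_div_assoc, le_div_iff₀ (by positivity)]; linarith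
    calc X ≤ X * (y ^ q * (2 / (1 + y)) ^ q) := le_mul_of_one_le_right hX0 h2
      _ = X * y ^ q * (2 / (1 + y)) ^ q := by ring
      _ ≤ _ := by gcongr
      _ ≤ _ := le_add_of_nonneg_left (by positivity)

lemma jap_two (k m : ℝ) : jap k ^ (2 * m) = (jap k ^ m) ^ 2 := by
  have : 0 ≤ jap k := Real.sqrt_nonneg _
  rw [← Real.rpow_natCast, ← Real.rpow_mul this]; congr 1; push_cast; ring

lemma pointwise_enn (t μ m p q : ℝ) (hμ : 0 < μ) (hp : 0 < p) (hq : 0 < q) (hpq : p + q = 1)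
    (Z : ℝ × ℝ → ℂ) (k η : ℝ) :
    ENNReal.ofReal (jap k ^ m * Aw μ k * |η - k * t|) * (‖Z (k, η)‖₊ : ℝ≥0∞) ≤
      (((ENNReal.ofReal (jap k ^ m) * (‖Z (k, η)‖₊ : ℝ≥0∞)) ^ 2) ^ ((1 : ℝ) / 2)
        * (ENNReal.ofReal (jap k ^ (2 * m) * pw t k η) * (‖Z (k, η)‖₊ : ℝ≥0∞) ^ 2)
          ^ ((1 : ℝ) / 2)) ^ ((1 : ℝ) / 2) * hw q (η - k * t) ^ ((1 : ℝ) / 2)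
      + (((ENNReal.ofReal (jap k ^ m * Aw μ k * |η - k * t|) * (‖Z (k, η)‖₊ : ℝ≥0∞)) ^ 2) ^ p
        * (ENNReal.ofReal (jap k ^ (2 * m) * Aw μ k ^ 2 * (η - k * t) ^ 2 * pw t k η)
          * (‖Z (k, η)‖₊ : ℝ≥0∞) ^ 2) ^ q) ^ ((1 : ℝ) / 2)
          * hw q (η - k * t) ^ ((1 : ℝ) / 2) := by
  have hJ : 0 ≤ jap k ^ m := Real.rpow_nonneg (Real.sqrt_nonneg _) _
  have hA := Aw_nonneg hμ k
  have hP0 : 0 ≤ pw t k η := by unfold pw; positivity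
  have hP : |η - k * t| ^ 2 ≤ pw t k η := by
    unfold pw; rw [sq_abs]; nlinarith [sq_nonneg k]
  have hz : (‖Z (k, η)‖₊ : ℝ≥0∞) = ENNReal.ofReal ‖Z (k, η)‖ := by
    rw [ofReal_norm]; rfl
  have key := pointwise_real (jap k ^ m) (Aw μ k) |η - k * t| (pw t k η) ‖Z (k, η)‖ p q hJ hA
    (Aw_le_one hμ k) (abs_nonneg _) hP (norm_nonneg _) hp hq hpq
  have hy : 0 ≤ |η - k * t| := abs_nonneg _
  rw [hw_half, hz, jap_two, ← sq_abs (η - k * t)]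
  set J := jap k ^ m
  set A := Aw μ k
  set y := |η - k * t|
  set P := pw t k η
  set z := ‖Z (k, η)‖
  have hz0 : 0 ≤ z := norm_nonneg _
  have hZ0 : z = ‖Z (k, η)‖ := rfl
  clear_value J A y P z
  have e0 : ENNReal.ofReal (J * A * y) * ENNReal.ofReal z = ENNReal.ofReal (J * A * y * z) :=
    (ENNReal.ofReal_mul (by positivity)).symm
  have e1 : ENNReal.ofReal J * ENNReal.ofReal z = ENNReal.ofReal (J * z) :=
    (ENNReal.ofReal_mul (by positivity)).symm
  have e2 : ENNReal.ofReal (J ^ 2 * P) * ENNReal.ofReal z ^ 2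
      = ENNReal.ofReal (J ^ 2 * P * z ^ 2) := by
    rw [← ENNReal.ofReal_pow hz0, ← ENNReal.ofReal_mul (by positivity)]
  have e3 : ENNReal.ofReal (J ^ 2 * A ^ 2 * y ^ 2 * P) * ENNReal.ofReal z ^ 2
      = ENNReal.ofReal (J ^ 2 * A ^ 2 * y ^ 2 * P * z ^ 2) := by
    rw [← ENNReal.ofReal_pow hz0, ← ENNReal.ofReal_mul (by positivity)]
  rw [e0, e1, e2, e3, ← ENNReal.ofReal_pow (p := J * z) (by positivity),
    ← ENNReal.ofReal_pow (p := J * A * y * z) (by positivity),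
    ENNReal.ofReal_rpow_of_nonneg (x := (J * z) ^ 2) (by positivity) (by positivity),
    ENNReal.ofReal_rpow_of_nonneg (x := J ^ 2 * P * z ^ 2) (by positivity) (by positivity),
    ENNReal.ofReal_rpow_of_nonneg (x := (J * A * y * z) ^ 2) (by positivity) (by positivity),
    ENNReal.ofReal_rpow_of_nonneg (x := J ^ 2 * A ^ 2 * y ^ 2 * P * z ^ 2)
      (by positivity) (by positivity),
    ← ENNReal.ofReal_mul (by positivity), ← ENNReal.ofReal_mul (by positivity),
    ENNReal.ofReal_rpow_of_nonneg (by positivity) (by positivity),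
    ENNReal.ofReal_rpow_of_nonneg (by positivity) (by positivity),
    ← ENNReal.ofReal_mul (by positivity), ← ENNReal.ofReal_mul (by positivity),
    ← ENNReal.ofReal_add (by positivity) (by positivity)]
  exact ENNReal.ofReal_le_ofReal key

lemma enn_add_sq (a b : ℝ≥0∞) : (a + b) ^ 2 ≤ 4 * (a ^ 2 + b ^ 2) := by
  rcases le_total a b with h | h
  · calc (a + b) ^ 2 ≤ (b + b) ^ 2 := by gcongr
      _ = 4 * b ^ 2 := by ring
      _ ≤ _ := by gcongr; exact le_add_self
  · calc (a + b) ^ 2 ≤ (a + a) ^ 2 := by gcongr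
      _ = 4 * a ^ 2 := by ring
      _ ≤ _ := by gcongr; exact le_self_add

lemma mu_rpow (μ s : ℝ) (hμ : 0 < μ) (hs : 0 ≤ s) (T : ℝ≥0∞) :
    T ^ s = ENNReal.ofReal (μ ^ (-s)) * (ENNReal.ofReal μ * T) ^ s := by
  rw [ENNReal.mul_rpow_of_nonneg _ _ hs, ENNReal.ofReal_rpow_of_nonneg hμ.le hs, ← mul_assoc,
    ← ENNReal.ofReal_mul (by positivity), ← Real.rpow_add hμ]
  simp

set_option maxHeartbeats 1000000 in
/-- energy/α interpolation lemma: there is `C = C(m,δ)` such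
that for all `t`, `μ ∈ (0,1)` and measurable `Z`,
`‖⟨k⟩^m A(k)|η−kt| Z‖_{L²_kL¹_η}
  ≤ C μ^{−1/4}(E^{1/2}D_γ^{1/4} + μ^{−δ}E^{1/2−2δ}D_α^{1/4+δ})`. -/
theorem stmt18 (m δ : ℝ) (hm : 0 < m) (hδ : δ ∈ Set.Ioo (0 : ℝ) (1 / 12)) :
    ∃ C : ℝ, 0 < C ∧
      ∀ (t μ : ℝ), μ ∈ Set.Ioo (0 : ℝ) 1 →
        ∀ Z : ℝ × ℝ → ℂ, Measurable Z →
          L2L1n (fun k η => jap k ^ m * Aw μ k * |η - k * t|) Z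
            ≤ ENNReal.ofReal C *
                (ENNReal.ofReal (μ ^ (-(1 / 4 : ℝ))) *
                  (En t μ m Z ^ ((1 : ℝ) / 2) * Dg t μ m Z ^ ((1 : ℝ) / 4)
                    + ENNReal.ofReal (μ ^ (-δ)) * En t μ m Z ^ ((1 : ℝ) / 2 - 2 * δ)
                        * Dal t μ m Z ^ ((1 : ℝ) / 4 + δ))) := by
  obtain ⟨hδ0, hδ1⟩ := hδ
  set p : ℝ := 1 / 2 - 2 * δ with hpdef
  set q : ℝ := 1 / 2 + 2 * δ with hqdef
  have hp : 0 < p := by rw [hpdef]; linarith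
  have hq : 0 < q := by rw [hqdef]; linarith
  have hpq : p + q = 1 := by rw [hpdef, hqdef]; ring
  have hH : 4 * ∫⁻ y, hw q y ≠ ∞ :=
    ENNReal.mul_ne_top (by norm_num) (hw_fin q (by rw [hqdef]; linarith))
  set H := 4 * ∫⁻ y, hw q y with hHdef
  refine ⟨(H ^ ((1 : ℝ) / 2)).toReal + 1, by positivity, ?_⟩
  intro t μ hμ Z hZ
  have hμ0 : 0 < μ := hμ.1
  have hAm := Aw_meas μ
  have hjm : Measurable jap := by unfold jap; fun_prop
  have hCle : H ^ ((1 : ℝ) / 2) ≤ ENNReal.ofReal ((H ^ ((1 : ℝ) / 2)).toReal + 1) := by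
    rw [ENNReal.le_ofReal_iff_toReal_le (ENNReal.rpow_ne_top_of_nonneg (by norm_num) hH)
      (by positivity)]
    linarith
  set a1 : ℝ → ℝ → ℝ≥0∞ := fun k η =>
    (ENNReal.ofReal (jap k ^ m) * (‖Z (k, η)‖₊ : ℝ≥0∞)) ^ 2 with ha1
  set b1 : ℝ → ℝ → ℝ≥0∞ := fun k η =>
    ENNReal.ofReal (jap k ^ (2 * m) * pw t k η) * (‖Z (k, η)‖₊ : ℝ≥0∞) ^ 2 with hb1
  set a2 : ℝ → ℝ → ℝ≥0∞ := fun k η =>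
    (ENNReal.ofReal (jap k ^ m * Aw μ k * |η - k * t|) * (‖Z (k, η)‖₊ : ℝ≥0∞)) ^ 2 with ha2
  set b2 : ℝ → ℝ → ℝ≥0∞ := fun k η =>
    ENNReal.ofReal (jap k ^ (2 * m) * Aw μ k ^ 2 * (η - k * t) ^ 2 * pw t k η)
      * (‖Z (k, η)‖₊ : ℝ≥0∞) ^ 2 with hb2
  have ma1 : Measurable (Function.uncurry a1) := by
    simp only [ha1, Function.uncurry_def]; fun_prop
  have mb1 : Measurable (Function.uncurry b1) := by
    simp only [hb1, Function.uncurry_def, pw]; fun_prop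
  have ma2 : Measurable (Function.uncurry a2) := by
    simp only [ha2, Function.uncurry_def, abs_eq_max_neg]; fun_prop
  have mb2 : Measurable (Function.uncurry b2) := by
    simp only [hb2, Function.uncurry_def, pw]; fun_prop
  have hhm := hw_meas q
  have G1 := aux_holder (1 / 2) (1 / 2) (by norm_num) (by norm_num) (by norm_num) a1 b1 ma1 mb1
    (hw q) hhm t
  have G2 := aux_holder p q hp.le hq.le hpq a2 b2 ma2 mb2 (hw q) hhm t
  set S1 := ∫⁻ k, ∫⁻ η, a1 k η with hS1
  set T1 := ∫⁻ k, ∫⁻ η, b1 k η with hT1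
  set S2 := ∫⁻ k, ∫⁻ η, a2 k η with hS2
  set T2 := ∫⁻ k, ∫⁻ η, b2 k η with hT2
  have hE : En t μ m Z = S1 ^ ((1 : ℝ) / 2) + S2 ^ ((1 : ℝ) / 2) := rfl
  have hDg : Dg t μ m Z = ENNReal.ofReal μ * T1 := rfl
  have hDa : Dal t μ m Z = ENNReal.ofReal μ * T2 := rfl
  set u1 : ℝ → ℝ → ℝ≥0∞ := fun k η =>
    (a1 k η ^ ((1 : ℝ) / 2) * b1 k η ^ ((1 : ℝ) / 2)) ^ ((1 : ℝ) / 2)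
      * hw q (η - k * t) ^ ((1 : ℝ) / 2) with hu1
  set u2 : ℝ → ℝ → ℝ≥0∞ := fun k η =>
    (a2 k η ^ p * b2 k η ^ q) ^ ((1 : ℝ) / 2)
      * hw q (η - k * t) ^ ((1 : ℝ) / 2) with hu2
  have mu1 : Measurable (Function.uncurry u1) := by
    simp only [hu1, Function.uncurry_def] at ma1 mb1 ⊢; fun_prop
  have mu2 : Measurable (Function.uncurry u2) := by
    simp only [hu2, Function.uncurry_def] at ma2 mb2 ⊢; fun_prop
  have mi1 : Measurable fun k => ∫⁻ η, u1 k η := mu1.lintegral_prod_right'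
  have hpt : ∀ k, (∫⁻ η, ENNReal.ofReal (jap k ^ m * Aw μ k * |η - k * t|)
      * (‖Z (k, η)‖₊ : ℝ≥0∞)) ^ 2 ≤ 4 * ((∫⁻ η, u1 k η) ^ 2 + (∫⁻ η, u2 k η) ^ 2) := by
    intro k
    refine le_trans ?_ (enn_add_sq _ _)
    gcongr
    have m1k : Measurable (u1 k) := mu1.of_uncurry_left
    rw [← lintegral_add_left m1k]
    exact lintegral_mono fun η => pointwise_enn t μ m p q hμ0 hp hq hpq Z k η
  have hmain : ∫⁻ k, (∫⁻ η, ENNReal.ofReal (jap k ^ m * Aw μ k * |η - k * t|)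
      * (‖Z (k, η)‖₊ : ℝ≥0∞)) ^ 2
      ≤ H * (S1 ^ ((1 : ℝ) / 2) * T1 ^ ((1 : ℝ) / 2) + S2 ^ p * T2 ^ q) := by
    calc _ ≤ ∫⁻ k, 4 * ((∫⁻ η, u1 k η) ^ 2 + (∫⁻ η, u2 k η) ^ 2) := lintegral_mono hpt
      _ = 4 * ((∫⁻ k, (∫⁻ η, u1 k η) ^ 2) + ∫⁻ k, (∫⁻ η, u2 k η) ^ 2) := by
        rw [lintegral_const_mul' _ _ (by norm_num), lintegral_add_left (mi1.pow_const 2)]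
      _ ≤ 4 * ((∫⁻ y, hw q y) * (S1 ^ ((1 : ℝ) / 2) * T1 ^ ((1 : ℝ) / 2))
            + (∫⁻ y, hw q y) * (S2 ^ p * T2 ^ q)) := by
        exact mul_le_mul_right (add_le_add G1 G2) 4
      _ = _ := by rw [hHdef]; ring
  have hS1E : S1 ^ ((1 : ℝ) / 4) ≤ En t μ m Z ^ ((1 : ℝ) / 2) := by
    have : S1 ^ ((1 : ℝ) / 4) = (S1 ^ ((1 : ℝ) / 2)) ^ ((1 : ℝ) / 2) := by
      rw [← ENNReal.rpow_mul]; norm_num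
    rw [this, hE]
    gcongr
    exact le_self_add
  have hS2E : S2 ^ (p / 2) ≤ En t μ m Z ^ p := by
    have : S2 ^ (p / 2) = (S2 ^ ((1 : ℝ) / 2)) ^ p := by
      rw [← ENNReal.rpow_mul]; congr 1; ring
    rw [this, hE]
    gcongr
    exact le_add_self
  have hT1 : T1 ^ ((1 : ℝ) / 4)
      = ENNReal.ofReal (μ ^ (-(1 / 4 : ℝ))) * Dg t μ m Z ^ ((1 : ℝ) / 4) := by
    rw [hDg]; exact mu_rpow μ (1 / 4) hμ0 (by norm_num) T1
  have hT2 : T2 ^ (q / 2) = ENNReal.ofReal (μ ^ (-(1 / 4 : ℝ))) * ENNReal.ofReal (μ ^ (-δ))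
      * Dal t μ m Z ^ ((1 : ℝ) / 4 + δ) := by
    have hq2 : q / 2 = 1 / 4 + δ := by rw [hqdef]; ring
    rw [hDa, hq2, mu_rpow μ (1 / 4 + δ) hμ0 (by linarith) T2,
      ← ENNReal.ofReal_mul (by positivity), ← Real.rpow_add hμ0, neg_add]
  unfold L2L1n
  calc _ ≤ (H * (S1 ^ ((1 : ℝ) / 2) * T1 ^ ((1 : ℝ) / 2) + S2 ^ p * T2 ^ q)) ^ ((1 : ℝ) / 2) := by
        gcongr
    _ = H ^ ((1 : ℝ) / 2)
        * (S1 ^ ((1 : ℝ) / 2) * T1 ^ ((1 : ℝ) / 2) + S2 ^ p * T2 ^ q) ^ ((1 : ℝ) / 2) :=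
        ENNReal.mul_rpow_of_nonneg _ _ (by norm_num)
    _ ≤ H ^ ((1 : ℝ) / 2) * ((S1 ^ ((1 : ℝ) / 2) * T1 ^ ((1 : ℝ) / 2)) ^ ((1 : ℝ) / 2)
          + (S2 ^ p * T2 ^ q) ^ ((1 : ℝ) / 2)) := by
        gcongr
        exact ENNReal.rpow_add_le_add_rpow _ _ (by norm_num) (by norm_num)
    _ = H ^ ((1 : ℝ) / 2) * (S1 ^ ((1 : ℝ) / 4) * T1 ^ ((1 : ℝ) / 4)
          + S2 ^ (p / 2) * T2 ^ (q / 2)) := by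
        rw [ENNReal.mul_rpow_of_nonneg (S1 ^ _) _ (by norm_num),
          ENNReal.mul_rpow_of_nonneg (S2 ^ _) _ (by norm_num), ← ENNReal.rpow_mul, ← ENNReal.rpow_mul,
          ← ENNReal.rpow_mul, ← ENNReal.rpow_mul]
        norm_num [div_eq_mul_inv]
    _ ≤ ENNReal.ofReal ((H ^ ((1 : ℝ) / 2)).toReal + 1)
        * (En t μ m Z ^ ((1 : ℝ) / 2) * T1 ^ ((1 : ℝ) / 4)
          + En t μ m Z ^ p * T2 ^ (q / 2)) := by gcongr
    _ = _ := by rw [hT1, hT2]; ring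
end
end

section
/- There exists a constant C depending only on m and δ such that for every measurable Z : ℝ² → ℂ: ‖⟨k⟩^m·A(k)·|k|^{1/2}·|η − kt|^{1/2}·p^{−1/4}·Z‖_{L²_k L¹_η} ≤ C·( D_{τα}^{1/4}·E^{1/2} + μ^{−δ}·D_γ^{δ}·D_{τα}^{1/4}·E^{1/2−2δ} ). -/
open MeasureTheory Real
open scoped ENNReal NNReal

noncomputable section

lemma aux_arctan (c l : ℝ) (hl : 0 < l) :
    ∫⁻ x : ℝ, ENNReal.ofReal (l / (l ^ 2 + (x - c) ^ 2)) = ENNReal.ofReal π := by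
  rw [lintegral_sub_right_eq_self (fun x : ℝ => ENNReal.ofReal (l / (l ^ 2 + x ^ 2))) c]
  have h1 : ∀ x : ℝ, l / (l ^ 2 + x ^ 2) = l⁻¹ * (1 + (x / l) ^ 2)⁻¹ := by
    intro x
    have : 0 < l ^ 2 + x ^ 2 := by positivity
    field_simp
  simp_rw [h1]
  rw [← ofReal_integral_eq_lintegral_ofReal]
  · rw [integral_const_mul, Measure.integral_comp_div (fun x : ℝ => (1 + x ^ 2)⁻¹),
      integral_univ_inv_one_add_sq, abs_of_pos hl, smul_eq_mul]
    congr 1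
    field_simp
  · exact (integrable_inv_one_add_sq.comp_div hl.ne').const_mul _
  · exact Filter.Eventually.of_forall fun x => by positivity

lemma carlson (u : ℝ → ℝ≥0∞) (hu : Measurable u) (c : ℝ) :
    ∫⁻ x, u x ≤ ENNReal.ofReal ((2 * π) ^ ((1 : ℝ) / 2)) * ((∫⁻ x, u x ^ 2) ^ ((1 : ℝ) / 4)
      * (∫⁻ x, ENNReal.ofReal ((x - c) ^ 2) * u x ^ 2) ^ ((1 : ℝ) / 4)) := by
  have hb0 : Measurable fun x => ENNReal.ofReal ((x - c) ^ 2) * u x ^ 2 := by fun_prop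
  have ha0 : Measurable fun x => u x ^ 2 := by fun_prop
  by_cases ha : (∫⁻ x, u x ^ 2) = 0
  · rw [lintegral_eq_zero_iff ha0] at ha
    have : ∫⁻ x, u x = 0 := by
      rw [lintegral_eq_zero_iff hu]
      filter_upwards [ha] with x hx
      simpa using hx
    rw [this]; exact zero_le
  by_cases hb : (∫⁻ x, ENNReal.ofReal ((x - c) ^ 2) * u x ^ 2) = 0
  · rw [lintegral_eq_zero_iff hb0] at hb
    have : ∫⁻ x, u x = 0 := by
      rw [lintegral_eq_zero_iff hu]
      filter_upwards [hb, Measure.ae_ne volume c] with x hx hxc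
      have h3 : 0 < (x - c) ^ 2 := by
        have := sub_ne_zero.2 hxc
        positivity
      simp only [Pi.zero_apply, mul_eq_zero, ENNReal.ofReal_eq_zero, not_le.2 h3, false_or] at hx
      simpa using hx
    rw [this]; exact zero_le
  have hpi : ENNReal.ofReal ((2 * π) ^ ((1 : ℝ) / 2)) ≠ 0 := by
    have : 0 < (2 * π) ^ ((1 : ℝ) / 2) := by positivity
    simpa using this
  have hq : ∀ y : ℝ≥0∞, y ≠ 0 → y ^ ((1 : ℝ) / 4) ≠ 0 := by
    intro y hy h
    rw [ENNReal.rpow_eq_zero_iff] at h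
    rcases h with h | h
    · exact hy h.1
    · linarith [h.2]
  by_cases ha' : (∫⁻ x, u x ^ 2) = ∞
  · rw [ha', ENNReal.top_rpow_of_pos (by norm_num), ENNReal.top_mul (hq _ hb),
      ENNReal.mul_top hpi]
    exact le_top
  by_cases hb' : (∫⁻ x, ENNReal.ofReal ((x - c) ^ 2) * u x ^ 2) = ∞
  · rw [hb', ENNReal.top_rpow_of_pos (by norm_num), ENNReal.mul_top (hq _ ha),
      ENNReal.mul_top hpi]
    exact le_top
  obtain ⟨a, haa, haeq⟩ : ∃ a : ℝ, 0 < a ∧ (∫⁻ x, u x ^ 2) = ENNReal.ofReal a :=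
    ⟨_, ENNReal.toReal_pos ha ha', (ENNReal.ofReal_toReal ha').symm⟩
  obtain ⟨b, hbb, hbeq⟩ : ∃ b : ℝ, 0 < b ∧
      (∫⁻ x, ENNReal.ofReal ((x - c) ^ 2) * u x ^ 2) = ENNReal.ofReal b :=
    ⟨_, ENNReal.toReal_pos hb hb', (ENNReal.ofReal_toReal hb').symm⟩
  rw [haeq, hbeq]
  set l : ℝ := (b / a) ^ ((1 : ℝ) / 2) with hl
  have hlp : 0 < l := by positivity
  have hpt : ∀ x, u x = (ENNReal.ofReal (l / (l ^ 2 + (x - c) ^ 2))) ^ ((1 : ℝ) / 2)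
      * (ENNReal.ofReal l * u x ^ 2 + ENNReal.ofReal l⁻¹ * (ENNReal.ofReal ((x - c) ^ 2) * u x ^ 2))
        ^ ((1 : ℝ) / 2) := by
    intro x
    have hP : 0 < l ^ 2 + (x - c) ^ 2 := by positivity
    rw [← mul_assoc, ← add_mul, ← ENNReal.ofReal_mul (by positivity),
      ← ENNReal.ofReal_add (by positivity) (by positivity),
      ← ENNReal.mul_rpow_of_nonneg _ _ (by norm_num), ← mul_assoc,
      ← ENNReal.ofReal_mul (by positivity)]
    have : l / (l ^ 2 + (x - c) ^ 2) * (l + l⁻¹ * (x - c) ^ 2) = 1 := by field_simp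
    rw [this, ENNReal.ofReal_one, one_mul, ← ENNReal.rpow_natCast, ← ENNReal.rpow_mul]
    norm_num
  have hK : ∫⁻ x, (ENNReal.ofReal l * u x ^ 2
      + ENNReal.ofReal l⁻¹ * (ENNReal.ofReal ((x - c) ^ 2) * u x ^ 2))
      = ENNReal.ofReal (l * a + l⁻¹ * b) := by
    rw [lintegral_add_left (by fun_prop), lintegral_const_mul _ ha0, lintegral_const_mul _ hb0,
      haeq, hbeq, ← ENNReal.ofReal_mul (by positivity), ← ENNReal.ofReal_mul (by positivity),
      ← ENNReal.ofReal_add (by positivity) (by positivity)]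
  calc ∫⁻ x, u x = _ := lintegral_congr hpt
    _ ≤ _ := ENNReal.lintegral_mul_norm_pow_le (by fun_prop) (by fun_prop) (by norm_num)
        (by norm_num) (by norm_num)
    _ = ENNReal.ofReal (π ^ ((1 : ℝ) / 2) * (l * a + l⁻¹ * b) ^ ((1 : ℝ) / 2)) := by
        rw [aux_arctan c l hlp, hK, ENNReal.ofReal_rpow_of_nonneg (by positivity) (by positivity),
          ENNReal.ofReal_rpow_of_nonneg (by positivity) (by positivity),
          ENNReal.ofReal_mul (by positivity)]
    _ ≤ _ := by
        rw [ENNReal.ofReal_rpow_of_nonneg (by positivity) (by positivity),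
          ENNReal.ofReal_rpow_of_nonneg (by positivity) (by positivity),
          ← ENNReal.ofReal_mul (by positivity), ← ENNReal.ofReal_mul (by positivity)]
        apply le_of_eq
        congr 1
        obtain ⟨x, rfl⟩ : ∃ x, a = Real.exp x := ⟨_, (Real.exp_log haa).symm⟩
        obtain ⟨y, rfl⟩ : ∃ y, b = Real.exp y := ⟨_, (Real.exp_log hbb).symm⟩
        have e1 : l * Real.exp x + l⁻¹ * Real.exp y = 2 * Real.exp ((x + y) / 2) := by
          rw [hl, ← Real.exp_sub, ← Real.exp_mul, ← Real.exp_neg, ← Real.exp_add, ← Real.exp_add,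
            two_mul]
          congr 2 <;> ring
        rw [e1, Real.mul_rpow (by norm_num) (by positivity),
          Real.mul_rpow (by norm_num) (by positivity), ← Real.exp_mul, ← Real.exp_mul,
          ← Real.exp_mul, ← Real.exp_add]
        have : (x + y) / 2 * (1 / 2) = x * (1 / 4) + y * (1 / 4) := by ring
        rw [this]; ring

lemma aux_R (c κ s : ℝ) (hκ : 0 < κ) (hs : 0 < s) (hs1 : s < 1) :
    ∫⁻ x : ℝ, (if |x - c| < κ then ENNReal.ofReal (|x - c| ^ (-1 + s) * κ ^ (-s)) else 0)
      ≤ ENNReal.ofReal (2 / s) := by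
  rw [lintegral_sub_right_eq_self
    (fun x : ℝ => (if |x| < κ then ENNReal.ofReal (|x| ^ (-1 + s) * κ ^ (-s)) else 0)) c]
  set q : ℝ → ℝ≥0∞ := (Set.Ioc 0 κ).indicator fun x => ENNReal.ofReal (x ^ (-1 + s) * κ ^ (-s))
    with hq
  have hqm : Measurable q := by
    apply Measurable.indicator (by fun_prop) measurableSet_Ioc
  have hqi : ∫⁻ x, q x = ENNReal.ofReal (1 / s) := by
    rw [hq, lintegral_indicator measurableSet_Ioc, ← ofReal_integral_eq_lintegral_ofReal,
      ← intervalIntegral.integral_of_le hκ.le, intervalIntegral.integral_mul_const,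
      integral_rpow (by left; linarith)]
    · congr 1
      rw [neg_add_cancel_comm, Real.zero_rpow hs.ne', sub_zero, Real.rpow_neg hκ.le]
      have : 0 < κ ^ s := by positivity
      field_simp
    · have := (intervalIntegral.intervalIntegrable_rpow' (a := 0) (b := κ) (r := -1 + s)
        (by linarith)).mul_const (κ ^ (-s))
      exact (intervalIntegrable_iff_integrableOn_Ioc_of_le hκ.le).1 this
    · filter_upwards [ae_restrict_mem measurableSet_Ioc] with x hx
      have := hx.1
      simp only [Pi.zero_apply]
      positivity
  calc _ ≤ ∫⁻ x, (q x + q (-x)) := by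
        apply lintegral_mono
        intro x
        simp only
        split_ifs with h
        · rcases lt_trichotomy x 0 with hx | hx | hx
          · rw [abs_of_neg hx] at h ⊢
            refine le_trans ?_ le_add_self
            rw [hq, Set.indicator_of_mem (show -x ∈ Set.Ioc 0 κ from ⟨by linarith, h.le⟩)]
          · subst hx
            rw [abs_zero, Real.zero_rpow (by linarith)]
            simp
          · rw [abs_of_pos hx] at h ⊢
            refine le_trans ?_ le_self_add
            rw [hq, Set.indicator_of_mem (show x ∈ Set.Ioc 0 κ from ⟨by linarith, h.le⟩)]
        · exact zero_le
    _ = _ := by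
        rw [lintegral_add_left hqm, lintegral_neg_eq_self, hqi,
          ← ENNReal.ofReal_add (by positivity) (by positivity)]
        congr 1
        ring

lemma pt1 (J A κ a P N δ : ℝ) (hJ : 0 < J) (hA : 0 < A) (hA1 : A ≤ 1) (hκ : 0 < κ) (ha : 0 < a)
    (hP : κ ^ 2 ≤ P) (hN : 0 ≤ N) (hδ : 0 < δ) :
    J * A * κ ^ ((1 : ℝ) / 2) * a ^ ((1 : ℝ) / 2) * P ^ (-(1 : ℝ) / 4) * N ≤
      (J ^ 2 * A ^ 2 * κ ^ 2 * a ^ 2 / P * N ^ 2) ^ ((1 : ℝ) / 4)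
        * ((J * A * a * N) ^ 2) ^ ((1 : ℝ) / 4 - δ) * (J ^ 2 * P * N ^ 2) ^ δ
        * (a ^ (-1 + 4 * δ) * κ ^ (-(4 * δ))) ^ ((1 : ℝ) / 2) := by
  have hP0 : 0 < P := lt_of_lt_of_le (by positivity) hP
  rcases hN.eq_or_lt with h | h
  · rw [← h, mul_zero]; positivity
  have h1 : J ^ 2 * (A ^ 2 * κ ^ 2) * N ^ 2 ≤ J ^ 2 * P * N ^ 2 := by
    have : A ^ 2 ≤ 1 := by nlinarith
    have : A ^ 2 * κ ^ 2 ≤ P := by nlinarith [sq_nonneg κ]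
    gcongr
  have h2 : (J ^ 2 * (A ^ 2 * κ ^ 2) * N ^ 2) ^ δ ≤ (J ^ 2 * P * N ^ 2) ^ δ :=
    Real.rpow_le_rpow (by positivity) h1 hδ.le
  refine le_trans (le_of_eq ?_) (mul_le_mul_of_nonneg_right
    (mul_le_mul_of_nonneg_left h2 (by positivity)) (by positivity))
  clear h1 h2 hP hA1
  obtain ⟨J, rfl⟩ : ∃ x, J = Real.exp x := ⟨_, (Real.exp_log hJ).symm⟩
  obtain ⟨A, rfl⟩ : ∃ x, A = Real.exp x := ⟨_, (Real.exp_log hA).symm⟩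
  obtain ⟨κ, rfl⟩ : ∃ x, κ = Real.exp x := ⟨_, (Real.exp_log hκ).symm⟩
  obtain ⟨a, rfl⟩ : ∃ x, a = Real.exp x := ⟨_, (Real.exp_log ha).symm⟩
  obtain ⟨P, rfl⟩ : ∃ x, P = Real.exp x := ⟨_, (Real.exp_log hP0).symm⟩
  obtain ⟨N, rfl⟩ : ∃ x, N = Real.exp x := ⟨_, (Real.exp_log h).symm⟩
  simp only [← Real.exp_mul, ← Real.exp_add, ← Real.exp_nat_mul, ← Real.exp_sub]
  congr 1
  push_cast
  ring

lemma pt2 (κ a P : ℝ) (hκ : 0 < κ) (ha : 0 < a) (hP : a ^ 2 ≤ P) :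
    κ ^ ((1 : ℝ) / 2) * a ^ ((1 : ℝ) / 2) * P ^ (-(1 : ℝ) / 4) ≤ κ ^ ((1 : ℝ) / 2) := by
  have hP0 : 0 < P := lt_of_lt_of_le (by positivity) hP
  have h1 : P ^ (-(1 : ℝ) / 4) ≤ (a ^ 2) ^ (-(1 : ℝ) / 4) :=
    Real.rpow_le_rpow_of_nonpos (by positivity) hP (by norm_num)
  have h2 : (a ^ 2) ^ (-(1 : ℝ) / 4) = (a ^ ((1 : ℝ) / 2))⁻¹ := by
    rw [← Real.rpow_natCast, ← Real.rpow_mul ha.le, ← Real.rpow_neg ha.le]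
    norm_num
  rw [h2] at h1
  have h3 : 0 < a ^ ((1 : ℝ) / 2) := by positivity
  calc _ ≤ κ ^ ((1 : ℝ) / 2) * a ^ ((1 : ℝ) / 2) * (a ^ ((1 : ℝ) / 2))⁻¹ := by gcongr
    _ = _ := by field_simp

lemma holder4 (f g h r : ℝ → ℝ≥0∞) (hf : Measurable f) (hg : Measurable g) (hh : Measurable h)
    (hr : Measurable r) (a b c d : ℝ) (ha : 0 ≤ a) (hb : 0 ≤ b) (hc : 0 ≤ c) (hd : 0 ≤ d)
    (hs : a + b + c + d = 1) :
    ∫⁻ x, f x ^ a * g x ^ b * h x ^ c * r x ^ d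
      ≤ (∫⁻ x, f x) ^ a * (∫⁻ x, g x) ^ b * (∫⁻ x, h x) ^ c * (∫⁻ x, r x) ^ d := by
  have := ENNReal.lintegral_prod_norm_pow_le (μ := (volume : Measure ℝ)) (Finset.univ : Finset (Fin 4))
    (f := ![f, g, h, r]) (p := ![a, b, c, d])
    (by intro i _; fin_cases i <;> simp <;> apply Measurable.aemeasurable <;> assumption)
    (by simp [Fin.sum_univ_four, hs]) (by intro i _; fin_cases i <;> simpa)
  simpa [Fin.prod_univ_four] using this

lemma ofReal_mul_nn_sq (x : ℝ) (z : ℂ) (hx : 0 ≤ x) :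
    ENNReal.ofReal x * (‖z‖₊ : ℝ≥0∞) ^ 2 = ENNReal.ofReal (x * ‖z‖ ^ 2) := by
  rw [ENNReal.ofReal_mul hx, ENNReal.ofReal_pow (norm_nonneg _), ofReal_norm]
  rfl

lemma ofReal_mul_nn (x : ℝ) (z : ℂ) (hx : 0 ≤ x) :
    ENNReal.ofReal x * (‖z‖₊ : ℝ≥0∞) = ENNReal.ofReal (x * ‖z‖) := by
  rw [ENNReal.ofReal_mul hx, ofReal_norm]
  rfl

/-- slice estimate, `k` fixed -/
lemma slice (t k J A δ : ℝ) (hJ : 0 < J) (hA : 0 < A) (hA1 : A ≤ 1) (hδ : 0 < δ) (hδ1 : δ < 1 / 12)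
    (z : ℝ → ℂ) (hz : Measurable z) :
    ∫⁻ η, ENNReal.ofReal (J * A * |k| ^ ((1 : ℝ) / 2) * |η - k * t| ^ ((1 : ℝ) / 2)
                * pw t k η ^ (-(1 : ℝ) / 4)) * (‖z η‖₊ : ℝ≥0∞) ≤
    ENNReal.ofReal (2 / (4 * δ)) ^ ((1 : ℝ) / 2) *
      ((∫⁻ η, ENNReal.ofReal (J ^ 2 * A ^ 2 * k ^ 2 * (η - k * t) ^ 2 / pw t k η)
        * (‖z η‖₊ : ℝ≥0∞) ^ 2) ^ ((1 : ℝ) / 4)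
      * (∫⁻ η, (ENNReal.ofReal (J * A * |η - k * t|) * (‖z η‖₊ : ℝ≥0∞)) ^ 2) ^ ((1 : ℝ) / 4 - δ)
      * (∫⁻ η, ENNReal.ofReal (J ^ 2 * pw t k η) * (‖z η‖₊ : ℝ≥0∞) ^ 2) ^ δ)
    + ENNReal.ofReal ((2 * π) ^ ((1 : ℝ) / 2)) * 2 ^ ((1 : ℝ) / 4) *
      ((∫⁻ η, ENNReal.ofReal (J ^ 2 * A ^ 2 * k ^ 2 * (η - k * t) ^ 2 / pw t k η)
        * (‖z η‖₊ : ℝ≥0∞) ^ 2) ^ ((1 : ℝ) / 4)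
      * (∫⁻ η, (ENNReal.ofReal (J * A * |η - k * t|) * (‖z η‖₊ : ℝ≥0∞)) ^ 2) ^ ((1 : ℝ) / 4)) := by
  rcases eq_or_ne k 0 with hk | hk
  · subst hk
    simp
  have hκ : 0 < |k| := abs_pos.2 hk
  have hpw : ∀ η, 0 < pw t k η := fun η => by unfold pw; positivity
  have hpm : Measurable fun η => pw t k η := by unfold pw; fun_prop
  set G : ℝ → ℝ≥0∞ := fun η => ENNReal.ofReal (J ^ 2 * A ^ 2 * k ^ 2 * (η - k * t) ^ 2 / pw t k η)
        * (‖z η‖₊ : ℝ≥0∞) ^ 2 with hG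
  set H : ℝ → ℝ≥0∞ := fun η => (ENNReal.ofReal (J * A * |η - k * t|) * (‖z η‖₊ : ℝ≥0∞)) ^ 2 with hH
  set F : ℝ → ℝ≥0∞ := fun η => ENNReal.ofReal (J ^ 2 * pw t k η) * (‖z η‖₊ : ℝ≥0∞) ^ 2 with hF
  set R : ℝ → ℝ≥0∞ := fun η => if |η - k * t| < |k| then
    ENNReal.ofReal (|η - k * t| ^ (-1 + 4 * δ) * |k| ^ (-(4 * δ))) else 0 with hR
  set u : ℝ → ℝ≥0∞ := fun η => if |η - k * t| < |k| then 0 else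
    ENNReal.ofReal (J * A) * (‖z η‖₊ : ℝ≥0∞) with hu
  have mset : MeasurableSet {η : ℝ | |η - k * t| < |k|} :=
    measurableSet_lt (by fun_prop) (by fun_prop)
  have mz : Measurable fun η => (‖z η‖₊ : ℝ≥0∞) := by fun_prop
  have mG : Measurable G := by
    refine (Measurable.ennreal_ofReal ?_).mul (mz.pow_const 2)
    refine Measurable.div ?_ hpm
    fun_prop
  have mH : Measurable H := by
    apply Measurable.pow_const
    apply Measurable.mul _ mz
    fun_prop
  have mF : Measurable F := by
    exact (hpm.const_mul _).ennreal_ofReal.mul (mz.pow_const 2)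
  have mR : Measurable R := Measurable.ite mset (by fun_prop) measurable_const
  have mu : Measurable u := Measurable.ite mset measurable_const (by fun_prop)
  have key : ∀ η, ENNReal.ofReal (J * A * |k| ^ ((1 : ℝ) / 2) * |η - k * t| ^ ((1 : ℝ) / 2)
                * pw t k η ^ (-(1 : ℝ) / 4)) * (‖z η‖₊ : ℝ≥0∞) ≤
      G η ^ ((1 : ℝ) / 4) * H η ^ ((1 : ℝ) / 4 - δ) * F η ^ δ * R η ^ ((1 : ℝ) / 2)
      + ENNReal.ofReal (|k| ^ ((1 : ℝ) / 2)) * u η := by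
    intro η
    rcases eq_or_ne (η - k * t) 0 with hv | hv
    · rw [hv, abs_zero, Real.zero_rpow (by norm_num)]
      simp
    have ha : 0 < |η - k * t| := abs_pos.2 hv
    have hp := hpw η
    by_cases hc : |η - k * t| < |k|
    · refine le_trans ?_ le_self_add
      simp only [hG, hH, hF, hR, if_pos hc]
      have hq : (0:ℝ) ≤ 1 / 4 - δ := by linarith
      rw [ofReal_mul_nn_sq _ _ (by positivity), ofReal_mul_nn_sq _ _ (by positivity),
        ofReal_mul_nn _ _ (by positivity), ofReal_mul_nn _ _ (by positivity),
        ← ENNReal.ofReal_pow (by positivity),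
        ENNReal.ofReal_rpow_of_nonneg (by positivity) (by positivity),
        ENNReal.ofReal_rpow_of_nonneg (by positivity) hq,
        ENNReal.ofReal_rpow_of_nonneg (by positivity) hδ.le,
        ENNReal.ofReal_rpow_of_nonneg (by positivity) (by positivity),
        ← ENNReal.ofReal_mul (by positivity), ← ENNReal.ofReal_mul (by positivity),
        ← ENNReal.ofReal_mul (by positivity)]
      apply ENNReal.ofReal_le_ofReal
      have := pt1 J A |k| |η - k * t| (pw t k η) ‖z η‖ δ hJ hA hA1 hκ ha
        (by unfold pw; rw [sq_abs]; nlinarith [sq_nonneg (η - k * t)]) (norm_nonneg _) hδ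
      rwa [sq_abs, sq_abs] at this
    · refine le_trans ?_ le_add_self
      simp only [hu, if_neg hc]
      rw [← mul_assoc, ← ENNReal.ofReal_mul (by positivity)]
      refine mul_le_mul' (ENNReal.ofReal_le_ofReal ?_) le_rfl
      have := pt2 |k| |η - k * t| (pw t k η) hκ ha
        (by unfold pw; rw [sq_abs]; nlinarith [sq_nonneg k])
      calc _ = J * A * (|k| ^ ((1 : ℝ) / 2) * |η - k * t| ^ ((1 : ℝ) / 2)
                * pw t k η ^ (-(1 : ℝ) / 4)) := by ring
        _ ≤ J * A * (|k| ^ ((1 : ℝ) / 2)) := by gcongr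
        _ = _ := by ring
  have hU : ENNReal.ofReal (|k| ^ 2) * ∫⁻ η, u η ^ 2 ≤ 2 * ∫⁻ η, G η := by
    rw [← lintegral_const_mul _ (by fun_prop), ← lintegral_const_mul _ mG]
    apply lintegral_mono
    intro η
    simp only [hu, hG]
    split_ifs with hc
    · simp
    · push Not at hc
      have hp := hpw η
      rw [mul_pow, ← mul_assoc, ← mul_assoc, ← ENNReal.ofReal_pow (by positivity),
        ← ENNReal.ofReal_mul (by positivity), ← ENNReal.ofReal_ofNat,
        ← ENNReal.ofReal_mul (by positivity)]
      refine mul_le_mul' (ENNReal.ofReal_le_ofReal ?_) le_rfl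
      rw [← mul_div_assoc, le_div_iff₀ hp, sq_abs]
      have h1 : k ^ 2 ≤ (η - k * t) ^ 2 := sq_le_sq.2 hc
      have h2 : pw t k η ≤ 2 * (η - k * t) ^ 2 := by unfold pw; linarith
      calc _ ≤ k ^ 2 * (J * A) ^ 2 * (2 * (η - k * t) ^ 2) := by gcongr
        _ = _ := by ring
  have hV : ∫⁻ η, ENNReal.ofReal ((η - k * t) ^ 2) * u η ^ 2 ≤ ∫⁻ η, H η := by
    apply lintegral_mono
    intro η
    simp only [hu, hH]
    split_ifs with hc
    · simp
    · rw [mul_pow, mul_pow, ← mul_assoc, ← ENNReal.ofReal_pow (by positivity),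
        ← ENNReal.ofReal_pow (by positivity), ← ENNReal.ofReal_mul (by positivity),
        mul_pow _ |η - k * t|, sq_abs, mul_comm ((η - k * t) ^ 2)]
  have hRi : ∫⁻ η, R η ≤ ENNReal.ofReal (2 / (4 * δ)) :=
    aux_R (k * t) |k| (4 * δ) hκ (by linarith) (by linarith)
  calc _ ≤ _ := lintegral_mono key
    _ = (∫⁻ η, G η ^ ((1 : ℝ) / 4) * H η ^ ((1 : ℝ) / 4 - δ) * F η ^ δ * R η ^ ((1 : ℝ) / 2))
        + ENNReal.ofReal (|k| ^ ((1 : ℝ) / 2)) * ∫⁻ η, u η := by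
        rw [lintegral_add_left (by fun_prop), lintegral_const_mul _ mu]
    _ ≤ _ := by
        refine add_le_add ?_ ?_
        · refine (holder4 G H F R mG mH mF mR _ _ _ _ (by norm_num) (by linarith) hδ.le
            (by norm_num) (by ring)).trans ?_
          rw [mul_comm]
          gcongr
        · have hc := carlson u mu (k * t)
          have e1 : ENNReal.ofReal (|k| ^ ((1 : ℝ) / 2))
              = ENNReal.ofReal (|k| ^ 2) ^ ((1 : ℝ) / 4) := by
            rw [ENNReal.ofReal_rpow_of_nonneg (by positivity) (by positivity),
              ← Real.rpow_natCast, ← Real.rpow_mul hκ.le]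
            norm_num
          calc _ ≤ _ := mul_le_mul' le_rfl hc
            _ = ENNReal.ofReal ((2 * π) ^ ((1 : ℝ) / 2)) *
                ((ENNReal.ofReal (|k| ^ 2) * ∫⁻ η, u η ^ 2) ^ ((1 : ℝ) / 4) *
                (∫⁻ η, ENNReal.ofReal ((η - k * t) ^ 2) * u η ^ 2) ^ ((1 : ℝ) / 4)) := by
                rw [e1, ENNReal.mul_rpow_of_nonneg _ _ (by norm_num)]
                ring
            _ ≤ ENNReal.ofReal ((2 * π) ^ ((1 : ℝ) / 2)) *
                ((2 * ∫⁻ η, G η) ^ ((1 : ℝ) / 4) * (∫⁻ η, H η) ^ ((1 : ℝ) / 4)) := by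
                gcongr
            _ = _ := by
                rw [ENNReal.mul_rpow_of_nonneg _ _ (by norm_num)]
                ring

lemma kcomb (g h f : ℝ → ℝ≥0∞) (hg : Measurable g) (hh : Measurable h) (hf : Measurable f)
    (C : ℝ≥0∞) (a b c : ℝ) (ha : 0 ≤ a) (hb : 0 ≤ b) (hc : 0 ≤ c) (hs : a + b + c = 1 / 2) :
    (∫⁻ k, (C * (g k ^ a * h k ^ b * f k ^ c)) ^ (2 : ℝ)) ^ (1 / (2 : ℝ))
      ≤ C * ((∫⁻ k, g k) ^ a * (∫⁻ k, h k) ^ b * (∫⁻ k, f k) ^ c) := by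
  have h1 := holder4 g h f (fun _ => 0) hg hh hf measurable_const (a * 2) (b * 2) (c * 2) 0
    (by linarith) (by linarith) (by linarith) le_rfl (by linarith)
  simp only [ENNReal.rpow_zero, mul_one] at h1
  have h2 : ∀ k, (C * (g k ^ a * h k ^ b * f k ^ c)) ^ (2 : ℝ)
      = C ^ (2 : ℝ) * (g k ^ (a * 2) * h k ^ (b * 2) * f k ^ (c * 2)) := by
    intro k
    simp only [ENNReal.mul_rpow_of_nonneg _ _ (zero_le_two (α := ℝ)), ENNReal.rpow_mul]
  simp_rw [h2]
  rw [lintegral_const_mul _ (by fun_prop)]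
  calc _ ≤ (C ^ (2 : ℝ) * _) ^ (1 / (2 : ℝ)) :=
        ENNReal.rpow_le_rpow (mul_le_mul' le_rfl h1) (by norm_num)
    _ = _ := by
        have h0 : (0 : ℝ) ≤ 1 / 2 := by norm_num
        simp only [ENNReal.mul_rpow_of_nonneg _ _ h0, ← ENNReal.rpow_mul]
        norm_num [mul_assoc]

lemma Aw_pos (μ k : ℝ) (hμ : 0 < μ) : 0 < Aw μ k := by
  unfold Aw
  split_ifs with h
  · exact one_pos
  · have : 0 < |k| := by linarith
    positivity

lemma Aw_le (μ k : ℝ) (hμ : 0 < μ) : Aw μ k ≤ 1 := by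
  unfold Aw
  split_ifs with h
  · exact le_rfl
  · push Not at h
    have hk : 0 < |k| := by linarith
    rw [show (-(1 : ℝ) / 3) = -(1 / 3) by norm_num, Real.rpow_neg hk.le, ← div_eq_mul_inv,
      div_le_one (by positivity)]
    exact Real.rpow_le_rpow hμ.le h (by norm_num)

/-- `D_{τα}`/energy interpolation lemma: there is `C = C(m,δ)`
such that for all `t`, `μ ∈ (0,1)` and measurable `Z`,
`‖⟨k⟩^m A(k)|k|^{1/2}|η−kt|^{1/2} p^{−1/4} Z‖_{L²_kL¹_η}
  ≤ C(D_{τα}^{1/4}E^{1/2} + μ^{−δ}D_γ^δ D_{τα}^{1/4}E^{1/2−2δ})`. -/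
theorem stmt19 (m δ : ℝ) (hm : 0 < m) (hδ : δ ∈ Set.Ioo (0 : ℝ) (1 / 12)) :
    ∃ C : ℝ, 0 < C ∧
      ∀ (t μ : ℝ), μ ∈ Set.Ioo (0 : ℝ) 1 →
        ∀ Z : ℝ × ℝ → ℂ, Measurable Z →
          L2L1n (fun k η =>
              jap k ^ m * Aw μ k * |k| ^ ((1 : ℝ) / 2) * |η - k * t| ^ ((1 : ℝ) / 2)
                * pw t k η ^ (-(1 : ℝ) / 4)) Z
            ≤ ENNReal.ofReal C *
                (Dta t μ m Z ^ ((1 : ℝ) / 4) * En t μ m Z ^ ((1 : ℝ) / 2)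
                  + ENNReal.ofReal (μ ^ (-δ)) * Dg t μ m Z ^ δ * Dta t μ m Z ^ ((1 : ℝ) / 4)
                      * En t μ m Z ^ ((1 : ℝ) / 2 - 2 * δ)) := by
  obtain ⟨hδ0, hδ1⟩ := hδ
  set C1 : ℝ := (2 / (4 * δ)) ^ ((1 : ℝ) / 2) with hC1
  set C2 : ℝ := (2 * π) ^ ((1 : ℝ) / 2) * 2 ^ ((1 : ℝ) / 4) with hC2
  have hC1p : 0 < C1 := by positivity
  have hC2p : 0 < C2 := by positivity
  refine ⟨C1 + C2, by positivity, ?_⟩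
  rintro t μ ⟨hμ, hμ1⟩ Z hZ
  have hjp : ∀ k, 0 < jap k := fun k => by unfold jap; positivity
  have hj2 : ∀ k, jap k ^ (2 * m) = (jap k ^ m) ^ 2 := fun k => by
    rw [← Real.rpow_natCast, ← Real.rpow_mul (hjp k).le, mul_comm]; norm_num
  have mj : Measurable jap := by unfold jap; fun_prop
  have mA := Aw_meas μ
  have mp : Measurable fun x : ℝ × ℝ => pw t x.1 x.2 := by unfold pw; fun_prop
  have mn : Measurable fun x : ℝ × ℝ => (‖Z x‖₊ : ℝ≥0∞) := by fun_prop
  set G : ℝ → ℝ≥0∞ := fun k => ∫⁻ η : ℝ,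
    ENNReal.ofReal (jap k ^ (2 * m) * Aw μ k ^ 2 * k ^ 2 * (η - k * t) ^ 2 / pw t k η)
      * (‖Z (k, η)‖₊ : ℝ≥0∞) ^ 2 with hG
  set H : ℝ → ℝ≥0∞ := fun k => ∫⁻ η : ℝ,
    (ENNReal.ofReal (jap k ^ m * Aw μ k * |η - k * t|) * (‖Z (k, η)‖₊ : ℝ≥0∞)) ^ 2 with hH
  set F : ℝ → ℝ≥0∞ := fun k => ∫⁻ η : ℝ,
    ENNReal.ofReal (jap k ^ (2 * m) * pw t k η) * (‖Z (k, η)‖₊ : ℝ≥0∞) ^ 2 with hF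
  have mG : Measurable G := by
    refine Measurable.lintegral_prod_right' (f := fun x : ℝ × ℝ =>
      ENNReal.ofReal (jap x.1 ^ (2 * m) * Aw μ x.1 ^ 2 * x.1 ^ 2 * (x.2 - x.1 * t) ^ 2
        / pw t x.1 x.2) * (‖Z x‖₊ : ℝ≥0∞) ^ 2) ?_
    refine (Measurable.ennreal_ofReal ?_).mul (mn.pow_const 2)
    refine Measurable.div ?_ mp
    fun_prop
  have mH : Measurable H := by
    refine Measurable.lintegral_prod_right' (f := fun x : ℝ × ℝ =>
      (ENNReal.ofReal (jap x.1 ^ m * Aw μ x.1 * |x.2 - x.1 * t|) * (‖Z x‖₊ : ℝ≥0∞)) ^ 2) ?_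
    refine Measurable.pow_const ((Measurable.ennreal_ofReal ?_).mul mn) 2
    fun_prop
  have mF : Measurable F := by
    refine Measurable.lintegral_prod_right' (f := fun x : ℝ × ℝ =>
      ENNReal.ofReal (jap x.1 ^ (2 * m) * pw t x.1 x.2) * (‖Z x‖₊ : ℝ≥0∞) ^ 2) ?_
    refine (Measurable.ennreal_ofReal ?_).mul (mn.pow_const 2)
    refine Measurable.mul ?_ mp
    fun_prop
  have hq : (0 : ℝ) ≤ 1 / 4 - δ := by linarith
  have hsl : ∀ k, ∫⁻ η : ℝ, ENNReal.ofReal (jap k ^ m * Aw μ k * |k| ^ ((1 : ℝ) / 2)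
        * |η - k * t| ^ ((1 : ℝ) / 2) * pw t k η ^ (-(1 : ℝ) / 4)) * (‖Z (k, η)‖₊ : ℝ≥0∞)
      ≤ ENNReal.ofReal C1 * (G k ^ ((1 : ℝ) / 4) * H k ^ ((1 : ℝ) / 4 - δ) * F k ^ δ)
        + ENNReal.ofReal C2 * (G k ^ ((1 : ℝ) / 4) * H k ^ ((1 : ℝ) / 4) * F k ^ (0 : ℝ)) := by
    intro k
    have := slice t k (jap k ^ m) (Aw μ k) δ (Real.rpow_pos_of_pos (hjp k) _) (Aw_pos μ k hμ)
      (Aw_le μ k hμ) hδ0 hδ1 (fun η => Z (k, η)) (by fun_prop)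
    rw [← hj2] at this
    rw [ENNReal.rpow_zero, mul_one, hC1, hC2, ENNReal.ofReal_mul (by positivity),
      ← ENNReal.ofReal_rpow_of_nonneg (by positivity) (by positivity),
      ← ENNReal.ofReal_rpow_of_nonneg (p := 1 / 4) (by norm_num) (by norm_num),
      ENNReal.ofReal_ofNat]
    exact this
  have hE : ∀ s : ℝ, 0 ≤ s → (∫⁻ k, H k) ^ s ≤ En t μ m Z ^ (2 * s) := by
    intro s hs
    have h1 : (∫⁻ k, H k) ^ ((1 : ℝ) / 2) ≤ En t μ m Z := by
      unfold En L2n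
      exact le_add_self
    calc (∫⁻ k, H k) ^ s = ((∫⁻ k, H k) ^ ((1 : ℝ) / 2)) ^ (2 * s) := by
          rw [← ENNReal.rpow_mul]; congr 1; ring
      _ ≤ _ := ENNReal.rpow_le_rpow h1 (by linarith)
  have hFD : ENNReal.ofReal (μ ^ (-δ)) * Dg t μ m Z ^ δ = (∫⁻ k, F k) ^ δ := by
    have : Dg t μ m Z = ENNReal.ofReal μ * ∫⁻ k, F k := rfl
    rw [this, ENNReal.mul_rpow_of_nonneg _ _ hδ0.le, ← mul_assoc,
      ENNReal.ofReal_rpow_of_nonneg hμ.le hδ0.le, ← ENNReal.ofReal_mul (by positivity),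
      ← Real.rpow_add hμ]
    simp
  have hGD : Dta t μ m Z = ∫⁻ k, G k := rfl
  rw [hFD, hGD]
  have k1 := kcomb G H F mG mH mF (ENNReal.ofReal C1) (1 / 4) (1 / 4 - δ) δ (by norm_num) hq hδ0.le
    (by ring)
  have k2 := kcomb G H F mG mH mF (ENNReal.ofReal C2) (1 / 4) (1 / 4) 0 (by norm_num) (by norm_num)
    le_rfl (by norm_num)
  have e1 := hE (1 / 4 - δ) hq
  have e2 := hE (1 / 4) (by norm_num)
  rw [show 2 * (1 / 4 - δ) = 1 / 2 - 2 * δ by ring] at e1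
  rw [show 2 * ((1 : ℝ) / 4) = 1 / 2 by norm_num] at e2
  unfold L2L1n
  simp_rw [← ENNReal.rpow_two]
  calc _ ≤ (∫⁻ k, (ENNReal.ofReal C1 * (G k ^ ((1 : ℝ) / 4) * H k ^ ((1 : ℝ) / 4 - δ) * F k ^ δ)
        + ENNReal.ofReal C2 * (G k ^ ((1 : ℝ) / 4) * H k ^ ((1 : ℝ) / 4) * F k ^ (0 : ℝ)))
          ^ (2 : ℝ)) ^ (1 / (2 : ℝ)) :=
        ENNReal.rpow_le_rpow (lintegral_mono fun k => ENNReal.rpow_le_rpow (hsl k) (by norm_num))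
          (by norm_num)
    _ ≤ _ := ENNReal.lintegral_Lp_add_le (by fun_prop) (by fun_prop) (by norm_num)
    _ ≤ _ := add_le_add k1 k2
    _ ≤ ENNReal.ofReal (C1 + C2) * ((∫⁻ k, F k) ^ δ * (∫⁻ k, G k) ^ ((1 : ℝ) / 4)
          * En t μ m Z ^ ((1 : ℝ) / 2 - 2 * δ))
        + ENNReal.ofReal (C1 + C2) * ((∫⁻ k, G k) ^ ((1 : ℝ) / 4)
          * En t μ m Z ^ ((1 : ℝ) / 2)) := by
        refine add_le_add (mul_le_mul' (ENNReal.ofReal_le_ofReal (by linarith)) ?_)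
          (mul_le_mul' (ENNReal.ofReal_le_ofReal (by linarith)) ?_)
        · calc _ ≤ _ := mul_le_mul' (mul_le_mul' le_rfl e1) le_rfl
            _ = _ := by ring
        · rw [ENNReal.rpow_zero, mul_one]
          exact mul_le_mul' le_rfl e2
    _ = _ := by rw [← mul_add]; congr 1; exact add_comm _ _
end
end
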